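/- Let n ≥ 1 and let f : [0, ∞) → ℝ be a continuous (n+1)-concave function with f(0) ≥ 0 and f(t) > 0 for all t > 0. Then the function g defined by g(t) = t / f(t) for t > 0 and g(0) = 0 is n-monotone on (0, ∞). -/

import Mathlib

open Matrix
open scoped ComplexOrder

/-- A real function `h` is `n`-monotone on a set `I ⊆ ℝ` if for all Hermitian `n × n`
complex matrices `A, B` with spectrum (i.e. all eigenvalues) in `I`, `A ≤ B` in the
Loewner order (i.e. `B − A` positive semidefinite) implies `h(A) ≤ h(B)`, where `h` is
applied via the continuous functional calculus `cfc`. -/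
def NMonotoneOn (n : ℕ) (h : ℝ → ℝ) (I : Set ℝ) : Prop :=
  ∀ A B : Matrix (Fin n) (Fin n) ℂ, A.IsHermitian → B.IsHermitian →
    spectrum ℝ A ⊆ I → spectrum ℝ B ⊆ I →
    (B - A).PosSemidef → (cfc h B - cfc h A).PosSemidef

/-- A real function `h` is `n`-concave on a set `I ⊆ ℝ` if for all Hermitian `n × n`
complex matrices `A, B` with spectrum in `I` and all `λ ∈ [0,1]`,
`h(λA + (1−λ)B) ≥ λ h(A) + (1−λ) h(B)` in the Loewner order. -/
def NConcaveOn (n : ℕ) (h : ℝ → ℝ) (I : Set ℝ) : Prop :=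
  ∀ A B : Matrix (Fin n) (Fin n) ℂ, A.IsHermitian → B.IsHermitian →
    spectrum ℝ A ⊆ I → spectrum ℝ B ⊆ I →
    ∀ l : ℝ, l ∈ Set.Icc (0 : ℝ) 1 →
      (cfc h (l • A + (1 - l) • B) - (l • cfc h A + (1 - l) • cfc h B)).PosSemidef

section FunctionalCalculus

variable {m n : Type*} [Fintype m] [DecidableEq m] [Fintype n] [DecidableEq n]

lemma isHermitian_cfc (f : ℝ → ℝ) (A : Matrix n n ℂ) : (cfc f A).IsHermitian :=
  (cfc_predicate f A : IsSelfAdjoint _)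

lemma cfc_mul_cfc (f g : ℝ → ℝ) (A : Matrix n n ℂ) :
    cfc f A * cfc g A = cfc (fun t ↦ f t * g t) A :=
  (cfc_mul f g A (A.finite_real_spectrum.continuousOn _)
    (A.finite_real_spectrum.continuousOn _)).symm

lemma posSemidef_cfc {f : ℝ → ℝ} {A : Matrix n n ℂ} (hf : ∀ t ∈ spectrum ℝ A, 0 ≤ f t) :
    (cfc f A).PosSemidef := by
  have h : cfc f A = (cfc (fun t ↦ √(f t)) A)ᴴ * cfc (fun t ↦ √(f t)) A := by
    rw [(isHermitian_cfc _ A).eq, cfc_mul_cfc]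
    exact cfc_congr fun t ht ↦ (Real.mul_self_sqrt (hf t ht)).symm
  rw [h]
  exact posSemidef_conjTranspose_mul_self _

lemma spectrum_nonneg_of_posSemidef {A : Matrix n n ℂ} (hA : A.PosSemidef) :
    spectrum ℝ A ⊆ Set.Ici 0 := by
  rw [hA.isHermitian.spectrum_real_eq_range_eigenvalues]
  rintro _ ⟨i, rfl⟩
  exact hA.eigenvalues_nonneg i

lemma spectrum_pos_of_posDef {A : Matrix n n ℂ} (hA : A.PosDef) :
    spectrum ℝ A ⊆ Set.Ioi 0 := by
  rw [hA.isHermitian.spectrum_real_eq_range_eigenvalues]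
  rintro _ ⟨i, rfl⟩
  exact hA.eigenvalues_pos i

lemma posDef_of_spectrum_pos {A : Matrix n n ℂ} (hA : A.IsHermitian)
    (h : spectrum ℝ A ⊆ Set.Ioi 0) : A.PosDef := by
  rw [hA.posDef_iff_eigenvalues_pos]
  intro i
  apply h
  rw [hA.spectrum_real_eq_range_eigenvalues]
  exact ⟨i, rfl⟩

/-- The functional calculus respects intertwining relations. -/
lemma cfc_mul_eq_mul_cfc (f : ℝ → ℝ) {Z : Matrix m m ℂ} {W : Matrix n n ℂ} {V : Matrix m n ℂ}
    (hZ : Z.IsHermitian) (hW : W.IsHermitian) (h : Z * V = V * W) :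
    cfc f Z * V = V * cfc f W := by
  classical
  let s : Finset ℝ := Z.finite_real_spectrum.toFinset ∪ W.finite_real_spectrum.toFinset
  let p : Polynomial ℝ := Lagrange.interpolate s id f
  have hp : ∀ t ∈ s, f t = p.eval t := fun t ht ↦
    (Lagrange.eval_interpolate_at_node f (v := id) (Set.injOn_id _) ht).symm
  have hfZ : cfc f Z = Polynomial.aeval Z p := by
    rw [← cfc_polynomial p Z hZ]
    exact cfc_congr fun t ht ↦ hp t (by simp [s, ht])
  have hfW : cfc f W = Polynomial.aeval W p := by
    rw [← cfc_polynomial p W hW]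
    exact cfc_congr fun t ht ↦ hp t (by simp [s, ht])
  rw [hfZ, hfW]
  clear hfZ hfW hp
  clear_value p
  induction p using Polynomial.induction_on' with
  | add p q hp hq => simp only [map_add, Matrix.add_mul, Matrix.mul_add, hp, hq]
  | monomial k a =>
    have hk : Z ^ k * V = V * W ^ k := by
      induction k with
      | zero => simp
      | succ k ih =>
        rw [pow_succ, pow_succ, Matrix.mul_assoc, h, ← Matrix.mul_assoc, ih, Matrix.mul_assoc]
    simp only [Polynomial.aeval_monomial, Algebra.algebraMap_eq_smul_one, smul_mul_assoc, one_mul,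
      Matrix.smul_mul, Matrix.mul_smul, hk]

end FunctionalCalculus

/-- Jensen's inequality for a contraction whose defect `1 - Cᴴ * C` has rank at most one. -/
lemma NConcaveOn.jensen_contraction {n : ℕ} {f : ℝ → ℝ}
    (hconc : NConcaveOn (n + 1) f (Set.Ici 0)) (hf0 : 0 ≤ f 0)
    {X C : Matrix (Fin n) (Fin n) ℂ} (hX : X.PosSemidef) {e : Matrix (Fin n) Unit ℂ}
    (he : Cᴴ * C + e * eᴴ = 1) :
    (cfc f (Cᴴ * X * C) - Cᴴ * cfc f X * C).PosSemidef := by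
  obtain ⟨J, k, hJJ, hJk, hkJ, hkk⟩ : ∃ (J : Matrix (Fin (n + 1)) (Fin n) ℂ)
      (k : Matrix (Fin (n + 1)) Unit ℂ),
      Jᴴ * J = 1 ∧ Jᴴ * k = 0 ∧ kᴴ * J = 0 ∧ kᴴ * k = 1 := by
    refine ⟨(1 : Matrix (Fin (n + 1)) (Fin (n + 1)) ℂ).submatrix id Fin.castSucc,
      (1 : Matrix (Fin (n + 1)) (Fin (n + 1)) ℂ).submatrix id fun _ ↦ Fin.last n, ?_, ?_, ?_, ?_⟩
    all_goals
      ext i j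
      simp [Matrix.mul_apply, Matrix.one_apply, (Fin.castSucc_lt_last _).ne,
        (Fin.castSucc_lt_last _).ne']
  set V : Matrix (Fin (n + 1)) (Fin n) ℂ := J * C + k * eᴴ with hV
  clear_value V
  have hJV : Jᴴ * V = C := by
    rw [hV, Matrix.mul_add, ← Matrix.mul_assoc, ← Matrix.mul_assoc, hJJ, hJk]; simp
  have hVJ : Vᴴ * J = Cᴴ := by
    rw [← hJV, conjTranspose_mul, conjTranspose_conjTranspose]
  have hkV : kᴴ * V = eᴴ := by
    rw [hV, Matrix.mul_add, ← Matrix.mul_assoc, ← Matrix.mul_assoc, hkJ, hkk]; simp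
  have hVk : Vᴴ * k = e := by
    rw [← conjTranspose_conjTranspose e, ← hkV, conjTranspose_mul, conjTranspose_conjTranspose]
  have hVV : Vᴴ * V = 1 := by
    conv_lhs => enter [2]; rw [hV]
    rw [Matrix.mul_add, ← Matrix.mul_assoc, ← Matrix.mul_assoc, hVJ, hVk, he]
  set Y := J * X * Jᴴ with hY
  have hYpos : Y.PosSemidef := hX.mul_mul_conjTranspose_same J
  set R := (2 : ℂ) • (V * Vᴴ) - 1 with hR
  have hRH : Rᴴ = R := by simp [hR]
  have hRV : R * V = V := by
    rw [hR, Matrix.sub_mul, Matrix.smul_mul, Matrix.mul_assoc, hVV, Matrix.mul_one, Matrix.one_mul]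
    module
  have hVR : Vᴴ * R = Vᴴ := by
    rw [← hRH, ← conjTranspose_mul, hRV]
  have hRR : R * R = 1 := by
    conv_lhs => enter [2]; rw [hR]
    rw [Matrix.mul_sub, Matrix.mul_smul, ← Matrix.mul_assoc, hRV, Matrix.mul_one, hR]
    module
  clear_value R Y
  set Y' := R * Y * R with hY'
  have hY'pos : Y'.PosSemidef := by
    have := hYpos.mul_mul_conjTranspose_same R
    rwa [hRH] at this
  clear_value Y'
  set W := Cᴴ * X * C with hW
  have hWpos : W.PosSemidef := hX.conjTranspose_mul_mul_same C
  clear_value W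
  have hVYV : Vᴴ * (Y * V) = W := by
    rw [hY, Matrix.mul_assoc, hJV, Matrix.mul_assoc, ← Matrix.mul_assoc, hVJ, hW, Matrix.mul_assoc]
  have key := hconc Y Y' hYpos.isHermitian hY'pos.isHermitian
    (spectrum_nonneg_of_posSemidef hYpos) (spectrum_nonneg_of_posSemidef hY'pos) (1 / 2)
    ⟨by norm_num, by norm_num⟩
  set Z := (1 / 2 : ℝ) • Y + (1 - 1 / 2 : ℝ) • Y' with hZ
  have hZH : Z.IsHermitian := by
    have h1 := hYpos.isHermitian.eq
    have h2 := hY'pos.isHermitian.eq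
    simp [Matrix.IsHermitian, hZ, h1, h2]
  have hZV : Z * V = V * W := by
    rw [hZ, Matrix.add_mul, Matrix.smul_mul, Matrix.smul_mul, hY', Matrix.mul_assoc, hRV,
      Matrix.mul_assoc, hR, Matrix.sub_mul, Matrix.smul_mul, Matrix.mul_assoc, hVYV,
      Matrix.one_mul]
    module
  clear_value Z
  have hfZV := cfc_mul_eq_mul_cfc f hZH hWpos.isHermitian hZV
  have hfY' : cfc f Y' * R = R * cfc f Y :=
    cfc_mul_eq_mul_cfc f hY'pos.isHermitian hYpos.isHermitian
      (by rw [hY', Matrix.mul_assoc, hRR, Matrix.mul_one])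
  have hfYJ : cfc f Y * J = J * cfc f X :=
    cfc_mul_eq_mul_cfc f hYpos.isHermitian hX.isHermitian
      (by rw [hY, Matrix.mul_assoc, hJJ, Matrix.mul_one])
  have hfYk : cfc f Y * k = k * cfc f (0 : Matrix Unit Unit ℂ) :=
    cfc_mul_eq_mul_cfc f hYpos.isHermitian (by simp)
      (by rw [hY, Matrix.mul_assoc, hJk]; simp)
  rw [cfc_apply_zero, Algebra.algebraMap_eq_smul_one, Matrix.mul_smul, Matrix.mul_one] at hfYk
  have hVfYV : Vᴴ * cfc f Y * V = Cᴴ * cfc f X * C + f 0 • (e * eᴴ) := by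
    conv_lhs => enter [2]; rw [hV]
    rw [Matrix.mul_add, ← Matrix.mul_assoc, ← Matrix.mul_assoc, Matrix.mul_assoc Vᴴ _ J, hfYJ,
      Matrix.mul_assoc Vᴴ _ k, hfYk, ← Matrix.mul_assoc, hVJ, Matrix.mul_smul, hVk, Matrix.smul_mul]
  have hVfY'V : Vᴴ * cfc f Y' * V = Vᴴ * cfc f Y * V := by
    conv_lhs => enter [2]; rw [← hRV]
    rw [Matrix.mul_assoc, ← Matrix.mul_assoc (cfc f Y'), hfY', ← Matrix.mul_assoc,
      ← Matrix.mul_assoc, hVR]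
  have hsum : cfc f W - Cᴴ * cfc f X * C =
      Vᴴ * (cfc f Z - ((1 / 2 : ℝ) • cfc f Y + (1 - 1 / 2 : ℝ) • cfc f Y')) * V +
        f 0 • (e * eᴴ) := by
    rw [Matrix.mul_sub, Matrix.sub_mul, Matrix.mul_assoc Vᴴ (cfc f Z), hfZV, ← Matrix.mul_assoc,
      hVV, Matrix.one_mul, Matrix.mul_add, Matrix.add_mul, Matrix.mul_smul, Matrix.mul_smul,
      Matrix.smul_mul, Matrix.smul_mul, hVfY'V, hVfYV]
    module
  rw [hsum]
  exact (key.conjTranspose_mul_mul_same V).add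
    ((posSemidef_self_mul_conjTranspose e).smul hf0)

/-- If `f` is `(n+1)`-concave with `f 0 ≥ 0`, then `t ↦ f t / t` decreases along rank one
perturbations of `n × n` matrices. -/
lemma NConcaveOn.posSemidef_cfc_div_sub_of_rank_one {n : ℕ} {f : ℝ → ℝ}
    (hconc : NConcaveOn (n + 1) f (Set.Ici 0)) (hf0 : 0 ≤ f 0)
    {A B : Matrix (Fin n) (Fin n) ℂ} (hA : A.PosDef) (v : Matrix (Fin n) Unit ℂ)
    (hB : B = A + v * vᴴ) :
    (cfc (fun t ↦ f t / t) A - cfc (fun t ↦ f t / t) B).PosSemidef := by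
  have hBpos : B.PosDef := hB ▸ hA.add_posSemidef (posSemidef_self_mul_conjTranspose v)
  have hsA : ∀ t ∈ spectrum ℝ A, 0 < t := fun t ht ↦ spectrum_pos_of_posDef hA ht
  have hsB : ∀ t ∈ spectrum ℝ B, 0 < t := fun t ht ↦ spectrum_pos_of_posDef hBpos ht
  have aux : ∀ M : Matrix (Fin n) (Fin n) ℂ, M.IsHermitian → (∀ t ∈ spectrum ℝ M, 0 < t) →
      ∃ S T : Matrix (Fin n) (Fin n) ℂ, Sᴴ = S ∧ Tᴴ = T ∧ S * S = M ∧ S * T = 1 ∧ T * S = 1 ∧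
        T * cfc f M * T = cfc (fun t ↦ f t / t) M := by
    intro M hM hs
    have hTS : cfc (fun t ↦ (√t)⁻¹) M * cfc (fun t ↦ √t) M = 1 := by
      rw [cfc_mul_cfc, ← cfc_const_one ℝ M hM]
      exact cfc_congr fun t ht ↦ inv_mul_cancel₀ (Real.sqrt_pos.2 (hs t ht)).ne'
    refine ⟨cfc (fun t ↦ √t) M, cfc (fun t ↦ (√t)⁻¹) M, isHermitian_cfc _ _, isHermitian_cfc _ _,
      ?_, mul_eq_one_comm.1 hTS, hTS, ?_⟩
    · rw [cfc_mul_cfc]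
      conv_rhs => rw [← cfc_id' ℝ M hM]
      exact cfc_congr fun t ht ↦ Real.mul_self_sqrt (hs t ht).le
    · rw [cfc_mul_cfc, cfc_mul_cfc]
      refine cfc_congr fun t ht ↦ ?_
      have h := Real.mul_self_sqrt (hs t ht).le
      have h' : (√t)⁻¹ * (√t)⁻¹ = t⁻¹ := by rw [← mul_inv, h]
      linear_combination f t * h'
  obtain ⟨S, S', hS, hS', hSS, hSS', hS'S, hSf⟩ := aux A hA.isHermitian hsA
  obtain ⟨T, T', hT, hT', hTT, hTT', hT'T, hTf⟩ := aux B hBpos.isHermitian hsB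
  set w := S' * v with hw
  have hSw : S * w = v := by rw [hw, ← Matrix.mul_assoc, hSS', Matrix.one_mul]
  obtain ⟨c, hc0, hc⟩ : ∃ c : ℝ, 0 ≤ c ∧ wᴴ * w = (c : ℂ) • (1 : Matrix Unit Unit ℂ) := by
    have h : 0 ≤ (wᴴ * w) () () := (posSemidef_conjTranspose_mul_self w).diag_nonneg
    obtain ⟨h1, h2⟩ := Complex.nonneg_iff.1 h
    refine ⟨((wᴴ * w) () ()).re, h1, ?_⟩
    ext i j
    rw [Matrix.smul_apply, Matrix.one_apply_eq, smul_eq_mul, mul_one]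
    exact Complex.ext rfl (by simpa using h2.symm)
  set r : ℝ := (√(1 + c))⁻¹ with hr
  have hrr : r * r * (1 + c) = 1 := by
    have h : √(1 + c) * √(1 + c) = 1 + c := Real.mul_self_sqrt (by linarith)
    have h0 : √(1 + c) ≠ 0 := (Real.sqrt_pos.2 (by linarith)).ne'
    rw [← h, hr]
    field_simp
  have hBS : B = S * (1 + w * wᴴ) * S := by
    rw [Matrix.mul_add, Matrix.add_mul, Matrix.mul_one, hSS, hB, ← hSw, conjTranspose_mul, hS]
    simp only [Matrix.mul_assoc]
  have hww : w * wᴴ * (w * wᴴ) = (c : ℂ) • (w * wᴴ) := by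
    rw [Matrix.mul_assoc, ← Matrix.mul_assoc wᴴ w, hc]
    simp
  set C := T' * S with hC
  have hCC : Cᴴ * C = 1 - ((r * r : ℝ) : ℂ) • (w * wᴴ) := by
    have hinv : (1 + w * wᴴ) * (1 - ((r * r : ℝ) : ℂ) • (w * wᴴ)) = 1 := by
      have hrr' : ((r * r : ℝ) : ℂ) * (1 + c) = 1 := by exact_mod_cast hrr
      rw [Matrix.mul_sub, Matrix.mul_one, Matrix.mul_smul, Matrix.add_mul, hww, Matrix.one_mul]
      generalize w * wᴴ = K
      linear_combination (norm := module) (-hrr') • K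
    have hinv' : (Cᴴ * C) * (1 + w * wᴴ) = 1 := by
      have h1 : 1 + w * wᴴ = S' * (T * T) * S' := by
        rw [hTT, hBS]
        calc _ = (S' * S) * (1 + w * wᴴ) * (S * S') := by rw [hS'S, hSS']; simp
          _ = _ := by simp only [Matrix.mul_assoc]
      rw [h1, hC, conjTranspose_mul, hS, hT']
      calc _ = S * (T' * (T' * (S * S') * T) * T) * S' := by simp only [Matrix.mul_assoc]
        _ = 1 := by rw [hSS', Matrix.mul_one, hT'T, Matrix.mul_one, hT'T, Matrix.mul_one, hSS']
    exact left_inv_eq_right_inv hinv' hinv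
  have hCBC : Cᴴ * B * C = A := by
    rw [hC, conjTranspose_mul, hS, hT', ← hTT]
    calc _ = S * ((T' * T) * (T * T')) * S := by simp only [Matrix.mul_assoc]
      _ = A := by rw [hT'T, hTT', Matrix.mul_one, Matrix.mul_one, hSS]
  have hJ := hconc.jensen_contraction hf0 hBpos.posSemidef (C := C) (e := (r : ℂ) • w) (by
    rw [hCC, conjTranspose_smul, Matrix.smul_mul, Matrix.mul_smul, smul_smul]
    simp)
  rw [hCBC] at hJ
  have h := hJ.conjTranspose_mul_mul_same S'
  rw [Matrix.mul_sub, Matrix.sub_mul, hS', hSf] at h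
  convert h using 2
  rw [hC, conjTranspose_mul, hS, hT', ← hTf]
  calc _ = (1 : Matrix (Fin n) (Fin n) ℂ) * (T' * cfc f B * T') * 1 := by simp
    _ = (S' * S) * (T' * cfc f B * T') * (S * S') := by rw [hS'S, hSS']
    _ = _ := by simp only [Matrix.mul_assoc]

/-- If `f` is `(n+1)`-concave with `f 0 ≥ 0`, then `t ↦ f t / t` is `n`-monotone decreasing on
positive definite matrices. -/
lemma NConcaveOn.posSemidef_cfc_div_sub {n : ℕ} {f : ℝ → ℝ}
    (hconc : NConcaveOn (n + 1) f (Set.Ici 0)) (hf0 : 0 ≤ f 0)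
    {A B : Matrix (Fin n) (Fin n) ℂ} (hA : A.PosDef) (hAB : (B - A).PosSemidef) :
    (cfc (fun t ↦ f t / t) A - cfc (fun t ↦ f t / t) B).PosSemidef := by
  obtain ⟨R, hR⟩ : ∃ R : Matrix (Fin n) (Fin n) ℂ, B - A = R * Rᴴ := by
    refine ⟨cfc (fun t ↦ √t) (B - A), ?_⟩
    rw [(isHermitian_cfc _ _).eq, cfc_mul_cfc]
    conv_lhs => rw [← cfc_id' ℝ (B - A) hAB.isHermitian]
    exact cfc_congr fun t ht ↦ (Real.mul_self_sqrt (spectrum_nonneg_of_posSemidef hAB ht)).symm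
  let v (i : Fin n) : Matrix (Fin n) Unit ℂ := R.submatrix id fun _ ↦ i
  have hB : B = A + ∑ i, v i * (v i)ᴴ := by
    rw [← sub_eq_iff_eq_add', hR]
    ext i j
    simp [v, Matrix.mul_apply, Matrix.sum_apply]
  rw [hB]
  generalize (Finset.univ : Finset (Fin n)) = s
  induction s using Finset.induction_on with
  | empty => simpa using PosSemidef.zero
  | insert a s ha ih =>
    have hpos : (A + ∑ i ∈ s, v i * (v i)ᴴ).PosDef :=
      hA.add_posSemidef (posSemidef_sum _ fun i _ ↦ posSemidef_self_mul_conjTranspose _)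
    have h := hconc.posSemidef_cfc_div_sub_of_rank_one hf0 hpos (v a)
      (B := A + ∑ i ∈ insert a s, v i * (v i)ᴴ) (by rw [Finset.sum_insert ha]; abel)
    simpa using ih.add h

/-- Inversion reverses the Loewner order. -/
lemma posSemidef_sub_of_mul_eq_one {n : Type*} [Fintype n] [DecidableEq n]
    {P Q G H : Matrix n n ℂ} (hPG : P * G = 1) (hQH : Q * H = 1) (hG : G.IsHermitian)
    (hH : H.PosSemidef) (h : (P - Q).PosSemidef) : (H - G).PosSemidef := by
  have hGP : G * P = 1 := mul_eq_one_comm.1 hPG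
  have h1 := h.conjTranspose_mul_mul_same G
  have h2 := hH.conjTranspose_mul_mul_same ((P - Q) * G)
  rw [conjTranspose_mul, hG.eq, h.isHermitian.eq] at h2
  rw [hG.eq] at h1
  convert h1.add h2 using 1
  have hD : G * (P - Q) * H = H - G := by
    rw [mul_sub, sub_mul, hGP, one_mul, mul_assoc, hQH, mul_one]
  have hD' : (P - Q) * G = 1 - Q * G := by rw [sub_mul, hPG]
  rw [hD, hD', mul_assoc G, hD', mul_sub, mul_sub, mul_one, mul_one, sub_mul, ← mul_assoc H,
    mul_eq_one_comm.1 hQH, one_mul]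
  abel

/-- If `f : [0, ∞) → ℝ` is continuous and `(n+1)`-concave with `f(0) ≥ 0` and `f(t) > 0`
for `t > 0`, then the function `g` with `g(t) = t / f(t)` for `t > 0` and `g(0) = 0` is
`n`-monotone on `(0, ∞)`. -/
theorem concave_implies_quotient_monotone
    (n : ℕ) (hn : 1 ≤ n) (f : ℝ → ℝ)
    (hfc : ContinuousOn f (Set.Ici 0))
    (hconc : NConcaveOn (n + 1) f (Set.Ici 0))
    (hf0 : 0 ≤ f 0)
    (hfpos : ∀ t : ℝ, 0 < t → 0 < f t)
    (g : ℝ → ℝ)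
    (hg : ∀ t : ℝ, 0 < t → g t = t / f t)
    (hg0 : g 0 = 0) :
    NMonotoneOn n g (Set.Ioi 0) := by
  intro A B hA hB hsA hsB hAB
  have hinv : ∀ M : Matrix (Fin n) (Fin n) ℂ, M.IsHermitian → spectrum ℝ M ⊆ Set.Ioi 0 →
      cfc (fun t ↦ f t / t) M * cfc g M = 1 := by
    intro M hM hs
    rw [cfc_mul_cfc, ← cfc_const_one ℝ M hM]
    refine cfc_congr fun t ht ↦ ?_
    have ht0 : 0 < t := hs ht
    have hft := hfpos t ht0
    rw [hg t ht0]
    field_simp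
  refine posSemidef_sub_of_mul_eq_one (hinv A hA hsA) (hinv B hB hsB) (isHermitian_cfc g A)
    (posSemidef_cfc fun t ht ↦ ?_)
    (hconc.posSemidef_cfc_div_sub hf0 (posDef_of_spectrum_pos hA hsA) hAB)
  have ht0 : 0 < t := hsB ht
  rw [hg t ht0]
  exact (div_pos ht0 (hfpos t ht0)).le
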